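/- (Pre/post DID under staggered adoption.) Suppose Assumption DID holds for each path d in {(1,1),(0,1)} relative to d' = (0,0), that D1 ≤ D2 a.s. (staggered adoption, so P(D = (1,0)) = 0), that P(D = (1,1)) > 0 and P(D = (0,1)) > 0, that 0 < P(D2 = 1 | X) < 1 a.s. and 0 < P(D2 = 1) < 1, and that all displayed expectations are finite. Then E[D2]^{-1} · E[D2 · (E[ΔY | D2 = 1, X] − E[ΔY | D2 = 0, X])] = τ_{(1,1)(0,0)} · P(D1 = 1 | D2 = 1) + τ_{(0,1)(0,0)} · P(D1 = 0 | D2 = 1). -/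

import Mathlib

/-!
The untreated trend `T = Y₂(0,0) − Y₀(0,0)` has one and the same conditional mean given `X` on the
whole population and on each treated path, hence also on `{D₂ = 1}` and on its complement
`{D₂ = 0}`. Staggered adoption makes `{D₂ = 0}` the never-treated group, where `ΔY = T`, so `m0` is
a version of this conditional mean there; as `P(D₂ = 1 ∣ X) < 1`, it is then one everywhere. The
estimand is therefore `E[ΔY − T ∣ D₂ = 1]`, and no anticipation turns `ΔY − T` into
`Y₂(d) − Y₂(0,0)` on average over each path `d`.
-/

open MeasureTheory Set
open scoped Classical

noncomputable section

namespace DIDMissing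

variable {Ω : Type*} {𝓧 : Type*}

/-- Real-valued indicator of a set. -/
def ind (A : Set Ω) : Ω → ℝ := A.indicator fun _ => (1 : ℝ)

/-- All treatment paths `{0,1}²` (coded as reals). -/
def allPaths : Set (ℝ × ℝ) := {(0, 0), (0, 1), (1, 0), (1, 1)}

/-- The three treated paths `{(1,1), (0,1), (1,0)}`. -/
def threePaths : Set (ℝ × ℝ) := {(1, 1), (0, 1), (1, 0)}

/-- The event `{D = d}` for a treatment path `d = (d₁, d₂)`. -/
def evD (D1 D2 : Ω → ℝ) (d : ℝ × ℝ) : Set Ω := {ω | D1 ω = d.1 ∧ D2 ω = d.2}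

/-- The event `{D₂ = b}`. -/
def evD2 (D2 : Ω → ℝ) (b : ℝ) : Set Ω := {ω | D2 ω = b}

/-- `g` is a (measurable-in-the-covariate) version of the conditional mean `E[Z ∣ A, X]`:
for every bounded measurable `h`, `E[1_A · Z · h(X)] = E[1_A · g(X) · h(X)]`. -/
def IsCondMeanGiven [MeasurableSpace Ω] [MeasurableSpace 𝓧] (P : Measure Ω) (X : Ω → 𝓧)
    (A : Set Ω) (Z : Ω → ℝ) (g : 𝓧 → ℝ) : Prop :=
  Measurable g ∧
    ∀ h : 𝓧 → ℝ, Measurable h → (∃ C, ∀ x, |h x| ≤ C) →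
      ∫ ω, ind A ω * Z ω * h (X ω) ∂P = ∫ ω, ind A ω * g (X ω) * h (X ω) ∂P

/-- Assumption DID for a path `d` relative to `d' = (0,0)`:
(i) no anticipation, `E[Y₀(d) ∣ D = d, X] = E[Y₀(0,0) ∣ D = d, X]` a.s., stated in the
version-free integral form; and (ii) conditional parallel trends, stated as the existence
of a common version of `E[Y₂(0,0) − Y₀(0,0) ∣ X]` and `E[Y₂(0,0) − Y₀(0,0) ∣ D = d, X]`. -/
def DID [MeasurableSpace Ω] [MeasurableSpace 𝓧] (P : Measure Ω) (X : Ω → 𝓧)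
    (D1 D2 : Ω → ℝ) (Y0p Y2p : ℝ × ℝ → Ω → ℝ) (d : ℝ × ℝ) : Prop :=
  (∀ h : 𝓧 → ℝ, Measurable h → (∃ C, ∀ x, |h x| ≤ C) →
      ∫ ω, ind (evD D1 D2 d) ω * Y0p d ω * h (X ω) ∂P
        = ∫ ω, ind (evD D1 D2 d) ω * Y0p (0, 0) ω * h (X ω) ∂P) ∧
  (∃ tr : 𝓧 → ℝ,
      IsCondMeanGiven P X Set.univ (fun ω => Y2p (0, 0) ω - Y0p (0, 0) ω) tr ∧
      IsCondMeanGiven P X (evD D1 D2 d) (fun ω => Y2p (0, 0) ω - Y0p (0, 0) ω) tr)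

/-- Assumption MAR: `S ⟂ (D₁, ΔY) ∣ (D₂, X)`, where `q d₂` is a version of the
missing-data probability `P(S = 1 ∣ D₂ = d₂, X)`, which is `(0,1]`-valued a.s. -/
def MAR [MeasurableSpace Ω] [MeasurableSpace 𝓧] (P : Measure Ω) (X : Ω → 𝓧)
    (D1 D2 S Y0 Y2 : Ω → ℝ) (q : ℝ → 𝓧 → ℝ) : Prop :=
  (∀ d2 ∈ ({0, 1} : Set ℝ), IsCondMeanGiven P X (evD2 D2 d2) S (q d2)) ∧
  (∀ d2 ∈ ({0, 1} : Set ℝ), ∀ᵐ ω ∂P, 0 < q d2 (X ω) ∧ q d2 (X ω) ≤ 1) ∧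
  (∀ d2 ∈ ({0, 1} : Set ℝ), ∀ f : ℝ × ℝ → ℝ, Measurable f → (∃ C, ∀ p, |f p| ≤ C) →
      ∀ h : 𝓧 → ℝ, Measurable h → (∃ C, ∀ x, |h x| ≤ C) →
        ∫ ω, ind (evD2 D2 d2) ω * S ω * f (D1 ω, Y2 ω - Y0 ω) * h (X ω) ∂P
          = ∫ ω, ind (evD2 D2 d2) ω * q d2 (X ω) * f (D1 ω, Y2 ω - Y0 ω) * h (X ω) ∂P)

/-- The path-dependent ATT `τ_{d,(0,0)} = E[Y₂(d) − Y₂(0,0) ∣ D = d]`. -/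
def tau [MeasurableSpace Ω] (P : Measure Ω) (D1 D2 : Ω → ℝ)
    (Y2p : ℝ × ℝ → Ω → ℝ) (d : ℝ × ℝ) : ℝ :=
  (P (evD D1 D2 d)).toReal⁻¹ * ∫ ω in evD D1 D2 d, (Y2p d ω - Y2p (0, 0) ω) ∂P

theorem ae_eq_condExp_of_forall_setIntegral_eq_of_bounded
    {E : Type*} [NormedAddCommGroup E] [NormedSpace ℝ E] [CompleteSpace E]
    {m m0 : MeasurableSpace Ω} {μ : Measure Ω} [IsFiniteMeasure μ] (hm : m ≤ m0)
    {f Z : Ω → E} (hZ : Integrable Z μ) (hf : StronglyMeasurable[m] f)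
    (h : ∀ s, MeasurableSet[m] s → (∃ C, ∀ ω ∈ s, ‖f ω‖ ≤ C) →
      ∫ ω in s, f ω ∂μ = ∫ ω in s, Z ω ∂μ) :
    f =ᵐ[μ] μ[Z | m] := by
  let s : ℕ → Set Ω := fun n => {ω | ‖f ω‖ ≤ n}
  have hs : ∀ n, MeasurableSet[m] (s n) := fun n =>
    StronglyMeasurable.measurableSet_le hf.norm stronglyMeasurable_const
  have on_s : ∀ n, f =ᵐ[μ.restrict (s n)] μ[Z | m] := fun n => by
    have hfs : Integrable f (μ.restrict (s n)) :=
      Measure.integrableOn_of_bounded (measure_ne_top _ _) (hf.mono hm).aestronglyMeasurable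
        (ae_restrict_of_forall_mem (hm _ (hs n)) fun _ hω => hω)
    refine .trans ?_ (condExp_restrict_ae_eq_restrict hm (hs n) hZ)
    refine ae_eq_condExp_of_forall_setIntegral_eq hm hZ.restrict
      (fun _ _ _ => hfs.integrableOn) (fun t ht _ => ?_) hf.aestronglyMeasurable
    rw [Measure.restrict_restrict (hm t ht)]
    exact h _ (ht.inter (hs n)) ⟨n, fun _ hω => hω.2⟩
  have iUnion_s : ⋃ n, s n = univ := iUnion_eq_univ_iff.2 fun ω => exists_nat_ge ‖f ω‖
  simpa only [iUnion_s, Measure.restrict_univ] using (ae_eq_restrict_iUnion_iff s f _).2 on_s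

section CondMean

theorem ind_mul_eq_indicator (A : Set Ω) (f : Ω → ℝ) :
    (fun ω => ind A ω * f ω) = A.indicator f := by
  funext ω
  simp only [ind, indicator_apply, ite_mul, one_mul, zero_mul]

variable [MeasurableSpace Ω] [MeasurableSpace 𝓧] {P : Measure Ω} {X : Ω → 𝓧} {A B : Set Ω}
  {Z Z' : Ω → ℝ} {g g' : 𝓧 → ℝ}

theorem integral_ind_mul (hA : MeasurableSet A) (f : Ω → ℝ) :
    ∫ ω, ind A ω * f ω ∂P = ∫ ω in A, f ω ∂P := by
  rw [ind_mul_eq_indicator, integral_indicator hA]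

theorem integral_ind (hA : MeasurableSet A) : ∫ ω, ind A ω ∂P = (P A).toReal := by
  simp only [ind, integral_indicator hA, setIntegral_const, smul_eq_mul, mul_one, Measure.real]

theorem integrable_mul_comp_of_bounded (hX : Measurable X) (hZ : Integrable Z P)
    {h : 𝓧 → ℝ} (hh : Measurable h) (hb : ∃ C, ∀ x, |h x| ≤ C) :
    Integrable (fun ω => Z ω * h (X ω)) P :=
  let ⟨_, hC⟩ := hb
  hZ.mul_bdd (hh.comp hX).aestronglyMeasurable (ae_of_all _ fun ω => hC (X ω))

theorem isCondMeanGiven_iff (hA : MeasurableSet A) :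
    IsCondMeanGiven P X A Z g ↔ Measurable g ∧
      ∀ h : 𝓧 → ℝ, Measurable h → (∃ C, ∀ x, |h x| ≤ C) →
        ∫ ω in A, Z ω * h (X ω) ∂P = ∫ ω in A, g (X ω) * h (X ω) ∂P := by
  simp only [IsCondMeanGiven, mul_assoc, integral_ind_mul hA]

namespace IsCondMeanGiven

theorem setIntegral_preimage (hg : IsCondMeanGiven P X A Z g) (hX : Measurable X)
    (hA : MeasurableSet A) {s : Set 𝓧} (hs : MeasurableSet s) :
    ∫ ω in X ⁻¹' s, g (X ω) ∂P.restrict A = ∫ ω in X ⁻¹' s, Z ω ∂P.restrict A := by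
  have mul_indicator (f : Ω → ℝ) :
      (fun ω => f ω * s.indicator (fun _ => 1) (X ω)) = (X ⁻¹' s).indicator f := by
    funext ω
    simp only [indicator_apply, mem_preimage, mul_ite, mul_one, mul_zero]
  have h := ((isCondMeanGiven_iff hA).1 hg).2 (s.indicator fun _ => 1)
    (measurable_const.indicator hs) ⟨1, fun x =>
      (norm_indicator_le_norm_self (fun _ => (1 : ℝ)) x).trans norm_one.le⟩
  rw [mul_indicator, mul_indicator (fun ω => g (X ω)), integral_indicator (hX hs),
    integral_indicator (hX hs)] at h
  exact h.symm

theorem setIntegral_eq (hg : IsCondMeanGiven P X A Z g) (hX : Measurable X)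
    (hA : MeasurableSet A) : ∫ ω in A, g (X ω) ∂P = ∫ ω in A, Z ω ∂P := by
  simpa only [preimage_univ, Measure.restrict_univ] using hg.setIntegral_preimage hX hA .univ

theorem congr_ae (hg : IsCondMeanGiven P X A Z g) (hA : MeasurableSet A) (hg' : Measurable g')
    (h : (fun ω => g (X ω)) =ᵐ[P.restrict A] fun ω => g' (X ω)) : IsCondMeanGiven P X A Z g' := by
  refine (isCondMeanGiven_iff hA).2 ⟨hg', fun k hk hb => ?_⟩
  rw [((isCondMeanGiven_iff hA).1 hg).2 k hk hb]
  exact integral_congr_ae (h.mul .rfl)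

variable [IsFiniteMeasure P]

theorem ae_eq_condExp (hg : IsCondMeanGiven P X A Z g) (hX : Measurable X)
    (hA : MeasurableSet A) (hZ : IntegrableOn Z A P) :
    (fun ω => g (X ω)) =ᵐ[P.restrict A]
      (P.restrict A)[Z | MeasurableSpace.comap X inferInstance] := by
  refine ae_eq_condExp_of_forall_setIntegral_eq_of_bounded hX.comap_le hZ
    (hg.1.comp (comap_measurable X)).stronglyMeasurable ?_
  rintro _ ⟨s, hs, rfl⟩ -
  exact hg.setIntegral_preimage hX hA hs

theorem integrableOn (hg : IsCondMeanGiven P X A Z g) (hX : Measurable X)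
    (hA : MeasurableSet A) (hZ : IntegrableOn Z A P) :
    IntegrableOn (fun ω => g (X ω)) A P :=
  integrable_condExp.congr (hg.ae_eq_condExp hX hA hZ).symm

theorem ae_eq (hg : IsCondMeanGiven P X A Z g) (hg' : IsCondMeanGiven P X A Z' g')
    (hX : Measurable X) (hA : MeasurableSet A) (hZ : IntegrableOn Z A P)
    (hZZ' : Z =ᵐ[P.restrict A] Z') :
    (fun ω => g (X ω)) =ᵐ[P.restrict A] fun ω => g' (X ω) :=
  calc
    _ =ᵐ[P.restrict A] (P.restrict A)[Z | _] := hg.ae_eq_condExp hX hA hZ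
    _ =ᵐ[P.restrict A] (P.restrict A)[Z' | _] := condExp_congr_ae hZZ'
    _ =ᵐ[P.restrict A] _ := (hg'.ae_eq_condExp hX hA (hZ.congr hZZ')).symm

theorem union (hgA : IsCondMeanGiven P X A Z g) (hgB : IsCondMeanGiven P X B Z g)
    (hX : Measurable X) (hA : MeasurableSet A) (hB : MeasurableSet B) (hAB : Disjoint A B)
    (hZ : IntegrableOn Z (A ∪ B) P) : IsCondMeanGiven P X (A ∪ B) Z g := by
  refine (isCondMeanGiven_iff (hA.union hB)).2 ⟨hgA.1, fun h hh hb => ?_⟩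
  have hZA := hZ.left_of_union
  have hZB := hZ.right_of_union
  have integrableOn_mul {C : Set Ω} {W : Ω → ℝ} (hW : IntegrableOn W C P) :
      IntegrableOn (fun ω => W ω * h (X ω)) C P := integrable_mul_comp_of_bounded hX hW hh hb
  rw [setIntegral_union hAB hB (integrableOn_mul hZA) (integrableOn_mul hZB),
    setIntegral_union hAB hB (integrableOn_mul (hgA.integrableOn hX hA hZA))
      (integrableOn_mul (hgB.integrableOn hX hB hZB)),
    ((isCondMeanGiven_iff hA).1 hgA).2 h hh hb, ((isCondMeanGiven_iff hB).1 hgB).2 h hh hb]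

theorem compl (hg : IsCondMeanGiven P X univ Z g) (hgA : IsCondMeanGiven P X A Z g)
    (hX : Measurable X) (hA : MeasurableSet A) (hZ : Integrable Z P) :
    IsCondMeanGiven P X Aᶜ Z g := by
  refine (isCondMeanGiven_iff hA.compl).2 ⟨hg.1, fun h hh hb => ?_⟩
  have hgX : Integrable (fun ω => g (X ω)) P :=
    integrableOn_univ.1 (hg.integrableOn hX .univ hZ.integrableOn)
  rw [setIntegral_compl hA (integrable_mul_comp_of_bounded hX hZ hh hb),
    setIntegral_compl hA (integrable_mul_comp_of_bounded hX hgX hh hb),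
    ((isCondMeanGiven_iff hA).1 hgA).2 h hh hb, ← setIntegral_univ (μ := P),
    ((isCondMeanGiven_iff .univ).1 hg).2 h hh hb, setIntegral_univ]

theorem ae_mem_of_ae_restrict_compl {q : 𝓧 → ℝ} (hq : IsCondMeanGiven P X univ (ind B) q)
    (hX : Measurable X) (hB : MeasurableSet B) (hq1 : ∀ᵐ ω ∂P, q (X ω) < 1) {s : Set 𝓧}
    (hs : MeasurableSet s) (h : ∀ᵐ ω ∂P.restrict Bᶜ, X ω ∈ s) : ∀ᵐ ω ∂P, X ω ∈ s := by
  have hN : MeasurableSet (X ⁻¹' sᶜ) := hX hs.compl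
  have hindB : Integrable (ind B) P := (integrable_const 1).indicator hB
  have hqX : Integrable (fun ω => q (X ω)) P :=
    integrableOn_univ.1 (hq.integrableOn hX .univ hindB.integrableOn)
  have ind_eq_one : ind B =ᵐ[P.restrict (X ⁻¹' sᶜ)] fun _ => 1 := by
    filter_upwards [ae_restrict_of_ae ((ae_restrict_iff' hB.compl).1 h), ae_restrict_mem hN]
      with ω hω hωs
    exact indicator_of_mem (by_contra fun hωB => hωs (hω hωB)) _
  have integral_one_sub : ∫ ω in X ⁻¹' sᶜ, (1 - q (X ω)) ∂P = 0 := by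
    have hqs := hq.setIntegral_preimage hX .univ hs.compl
    rw [Measure.restrict_univ, integral_congr_ae ind_eq_one] at hqs
    rw [integral_sub (integrable_const 1) hqX.restrict, hqs, sub_self]
  have one_sub_pos : ∀ᵐ ω ∂P.restrict (X ⁻¹' sᶜ), 0 < 1 - q (X ω) :=
    ae_restrict_of_ae (hq1.mono fun _ => sub_pos.2)
  have one_sub_eq_zero := (integral_eq_zero_iff_of_nonneg_ae (one_sub_pos.mono fun _ => le_of_lt)
    ((integrable_const 1).sub hqX.restrict)).1 integral_one_sub
  have ae_false : ∀ᵐ _ ∂P.restrict (X ⁻¹' sᶜ), False := by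
    filter_upwards [one_sub_pos, one_sub_eq_zero] with _ hpos hzero using hpos.ne' hzero
  filter_upwards [(ae_restrict_iff' hN).1 ae_false] with _ hω using not_not.1 hω

end IsCondMeanGiven

theorem setIntegral_condMean_sub_eq [IsFiniteMeasure P] (hX : Measurable X)
    (hB : MeasurableSet B) {W T : Ω → ℝ} (hW : Integrable W P) (hT : Integrable T P)
    (hWT : W =ᵐ[P.restrict Bᶜ] T) {m0 m1 q tr : 𝓧 → ℝ}
    (htr : IsCondMeanGiven P X univ T tr) (htrB : IsCondMeanGiven P X B T tr)
    (hm1 : IsCondMeanGiven P X B W m1) (hm0 : IsCondMeanGiven P X Bᶜ W m0)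
    (hq : IsCondMeanGiven P X univ (ind B) q) (hq1 : ∀ᵐ ω ∂P, q (X ω) < 1) :
    ∫ ω in B, (m1 (X ω) - m0 (X ω)) ∂P = ∫ ω in B, (W ω - T ω) ∂P := by
  have m0_eq_tr_compl : ∀ᵐ ω ∂P.restrict Bᶜ, m0 (X ω) = tr (X ω) :=
    hm0.ae_eq (htr.compl htrB hX hB hT) hX hB.compl hW.integrableOn hWT
  have m0_eq_tr : ∀ᵐ ω ∂P, m0 (X ω) = tr (X ω) :=
    hq.ae_mem_of_ae_restrict_compl hX hB hq1 (measurableSet_eq_fun hm0.1 htr.1) m0_eq_tr_compl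
  calc ∫ ω in B, (m1 (X ω) - m0 (X ω)) ∂P
      = ∫ ω in B, (m1 (X ω) - tr (X ω)) ∂P :=
        integral_congr_ae (ae_restrict_of_ae (m0_eq_tr.mono fun _ hω => by simp only [hω]))
    _ = ∫ ω in B, m1 (X ω) ∂P - ∫ ω in B, tr (X ω) ∂P :=
        integral_sub (hm1.integrableOn hX hB hW.integrableOn)
          (htrB.integrableOn hX hB hT.integrableOn)
    _ = ∫ ω in B, W ω ∂P - ∫ ω in B, T ω ∂P := by
        rw [hm1.setIntegral_eq hX hB, htrB.setIntegral_eq hX hB]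
    _ = ∫ ω in B, (W ω - T ω) ∂P := (integral_sub hW.restrict hT.restrict).symm

end CondMean

section Paths

/-- The untreated trend `Y₂(0,0) − Y₀(0,0)` that parallel trends is about. -/
def untreatedTrend (Y0p Y2p : ℝ × ℝ → Ω → ℝ) : Ω → ℝ := fun ω => Y2p (0, 0) ω - Y0p (0, 0) ω

variable {D1 D2 : Ω → ℝ}

theorem compl_evD2_one (hD2v : ∀ ω, D2 ω = 0 ∨ D2 ω = 1) : (evD2 D2 1)ᶜ = evD2 D2 0 := by
  ext ω
  rcases hD2v ω with h2 | h2 <;> simp [evD2, h2]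

theorem ind_evD2_one (hD2v : ∀ ω, D2 ω = 0 ∨ D2 ω = 1) : ind (evD2 D2 1) = D2 := by
  funext ω
  rcases hD2v ω with h2 | h2 <;> simp [ind, evD2, h2]

theorem evD2_eq_union (hD1v : ∀ ω, D1 ω = 0 ∨ D1 ω = 1) (b : ℝ) :
    evD2 D2 b = evD D1 D2 (1, b) ∪ evD D1 D2 (0, b) := by
  ext ω
  rcases hD1v ω with h1 | h1 <;> simp [evD, evD2, h1]

theorem disjoint_evD {d e : ℝ × ℝ} (hde : d ≠ e) : Disjoint (evD D1 D2 d) (evD D1 D2 e) :=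
  disjoint_left.2 fun _ hd he => hde (Prod.ext (hd.1.symm.trans he.1) (hd.2.symm.trans he.2))

variable [MeasurableSpace Ω]

theorem measurableSet_evD (hD1 : Measurable D1) (hD2 : Measurable D2) (d : ℝ × ℝ) :
    MeasurableSet (evD D1 D2 d) :=
  (hD1 (measurableSet_singleton d.1)).inter (hD2 (measurableSet_singleton d.2))

theorem tau_mul_measure {P : Measure Ω} [IsFiniteMeasure P] {d : ℝ × ℝ}
    (hd : 0 < P (evD D1 D2 d)) (Y2p : ℝ × ℝ → Ω → ℝ) :
    tau P D1 D2 Y2p d * (P (evD D1 D2 d)).toReal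
      = ∫ ω in evD D1 D2 d, (Y2p d ω - Y2p (0, 0) ω) ∂P := by
  have hd' : (P (evD D1 D2 d)).toReal ≠ 0 := (ENNReal.toReal_pos hd.ne' (measure_ne_top _ _)).ne'
  rw [tau, mul_right_comm, inv_mul_cancel₀ hd', one_mul]

namespace DID

variable [MeasurableSpace 𝓧] {P : Measure Ω} {X : Ω → 𝓧} {Y0p Y2p : ℝ × ℝ → Ω → ℝ} {d : ℝ × ℝ}

theorem isCondMeanGiven_evD [IsFiniteMeasure P] (hDID : DID P X D1 D2 Y0p Y2p d)
    (hX : Measurable X) (hd : MeasurableSet (evD D1 D2 d))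
    (hT : Integrable (untreatedTrend Y0p Y2p) P) {tr : 𝓧 → ℝ}
    (htr : IsCondMeanGiven P X univ (untreatedTrend Y0p Y2p) tr) :
    IsCondMeanGiven P X (evD D1 D2 d) (untreatedTrend Y0p Y2p) tr := by
  obtain ⟨-, tr', htr', htrd'⟩ := hDID
  have tr'_eq_tr := htr'.ae_eq htr hX .univ hT.integrableOn .rfl
  rw [Measure.restrict_univ] at tr'_eq_tr
  exact htrd'.congr_ae hd htr.1 (ae_restrict_of_ae tr'_eq_tr)

theorem setIntegral_noAnticipation (hDID : DID P X D1 D2 Y0p Y2p d)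
    (hd : MeasurableSet (evD D1 D2 d)) :
    ∫ ω in evD D1 D2 d, Y0p d ω ∂P = ∫ ω in evD D1 D2 d, Y0p (0, 0) ω ∂P := by
  simpa only [mul_one, integral_ind_mul hd] using
    hDID.1 (fun _ => 1) measurable_const ⟨1, fun _ => abs_one.le⟩

theorem setIntegral_diff_sub_untreatedTrend (hDID : DID P X D1 D2 Y0p Y2p d)
    (hd : MeasurableSet (evD D1 D2 d)) {Y0 Y2 : Ω → ℝ} (hY0 : Integrable Y0 P)
    (hY2 : Integrable Y2 P) (hY0p : Integrable (Y0p (0, 0)) P) (hY2p : Integrable (Y2p (0, 0)) P)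
    (hcons0 : ∀ ω, Y0 ω = Y0p (D1 ω, D2 ω) ω) (hcons2 : ∀ ω, Y2 ω = Y2p (D1 ω, D2 ω) ω) :
    ∫ ω in evD D1 D2 d, (Y2 ω - Y0 ω - untreatedTrend Y0p Y2p ω) ∂P
      = ∫ ω in evD D1 D2 d, (Y2p d ω - Y2p (0, 0) ω) ∂P := by
  have path_eq {ω : Ω} (hω : ω ∈ evD D1 D2 d) : (D1 ω, D2 ω) = d := Prod.ext hω.1 hω.2
  have Y0_eq : ∫ ω in evD D1 D2 d, Y0 ω ∂P = ∫ ω in evD D1 D2 d, Y0p (0, 0) ω ∂P := by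
    rw [← hDID.setIntegral_noAnticipation hd]
    exact setIntegral_congr_fun hd fun ω hω => by simp only [hcons0, path_eq hω]
  calc ∫ ω in evD D1 D2 d, (Y2 ω - Y0 ω - untreatedTrend Y0p Y2p ω) ∂P
      = ∫ ω in evD D1 D2 d, ((Y2 ω - Y2p (0, 0) ω) - (Y0 ω - Y0p (0, 0) ω)) ∂P := by
        simp only [untreatedTrend, sub_sub_sub_comm]
    _ = ∫ ω in evD D1 D2 d, (Y2 ω - Y2p (0, 0) ω) ∂P
        - ∫ ω in evD D1 D2 d, (Y0 ω - Y0p (0, 0) ω) ∂P :=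
        integral_sub (hY2.sub hY2p).restrict (hY0.sub hY0p).restrict
    _ = ∫ ω in evD D1 D2 d, (Y2 ω - Y2p (0, 0) ω) ∂P := by
        rw [integral_sub hY0.restrict hY0p.restrict, Y0_eq, sub_self, sub_zero]
    _ = ∫ ω in evD D1 D2 d, (Y2p d ω - Y2p (0, 0) ω) ∂P :=
        setIntegral_congr_fun hd fun ω hω => by simp only [hcons2, path_eq hω]

end DID

theorem diff_ae_eq_untreatedTrend_of_staggered {P : Measure Ω}
    {Y0 Y2 : Ω → ℝ} (hD2 : Measurable D2) (hD1v : ∀ ω, D1 ω = 0 ∨ D1 ω = 1)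
    {Y0p Y2p : ℝ × ℝ → Ω → ℝ} (hcons0 : ∀ ω, Y0 ω = Y0p (D1 ω, D2 ω) ω)
    (hcons2 : ∀ ω, Y2 ω = Y2p (D1 ω, D2 ω) ω) (hstag : ∀ᵐ ω ∂P, D1 ω ≤ D2 ω) :
    (fun ω => Y2 ω - Y0 ω) =ᵐ[P.restrict (evD2 D2 0)] untreatedTrend Y0p Y2p := by
  filter_upwards [ae_restrict_of_ae hstag, ae_restrict_mem (hD2 (measurableSet_singleton 0))]
    with ω hle (h2 : D2 ω = 0)
  have h1 : D1 ω = 0 := (hD1v ω).resolve_right fun h1 => by linarith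
  rw [hcons0, hcons2, h1, h2, untreatedTrend]

theorem isCondMeanGiven_untreatedTrend_evD2_one [MeasurableSpace 𝓧] {P : Measure Ω}
    [IsFiniteMeasure P] {X : Ω → 𝓧} (hX : Measurable X) (hD1 : Measurable D1) (hD2 : Measurable D2)
    (hD1v : ∀ ω, D1 ω = 0 ∨ D1 ω = 1) {Y0p Y2p : ℝ × ℝ → Ω → ℝ}
    (hT : Integrable (untreatedTrend Y0p Y2p) P)
    (hDID11 : DID P X D1 D2 Y0p Y2p (1, 1)) (hDID01 : DID P X D1 D2 Y0p Y2p (0, 1)) {tr : 𝓧 → ℝ}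
    (htr : IsCondMeanGiven P X univ (untreatedTrend Y0p Y2p) tr) :
    IsCondMeanGiven P X (evD2 D2 1) (untreatedTrend Y0p Y2p) tr := by
  have hd := measurableSet_evD hD1 hD2
  rw [evD2_eq_union hD1v]
  exact (hDID11.isCondMeanGiven_evD hX (hd _) hT htr).union
    (hDID01.isCondMeanGiven_evD hX (hd _) hT htr) hX (hd _) (hd _) (disjoint_evD (by simp))
    hT.integrableOn

theorem setIntegral_evD2 {P : Measure Ω} (hD1 : Measurable D1) (hD2 : Measurable D2)
    (hD1v : ∀ ω, D1 ω = 0 ∨ D1 ω = 1) (b : ℝ) {f : Ω → ℝ} (hf : IntegrableOn f (evD2 D2 b) P) :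
    ∫ ω in evD2 D2 b, f ω ∂P
      = ∫ ω in evD D1 D2 (1, b), f ω ∂P + ∫ ω in evD D1 D2 (0, b), f ω ∂P := by
  rw [evD2_eq_union hD1v] at hf ⊢
  exact setIntegral_union (disjoint_evD (by simp)) (measurableSet_evD hD1 hD2 _)
    hf.left_of_union hf.right_of_union

end Paths

theorem statement_19_general [MeasurableSpace Ω] [MeasurableSpace 𝓧]
    {P : Measure Ω} [IsFiniteMeasure P] {X : Ω → 𝓧} (hX : Measurable X)
    {Y0 Y2 D1 D2 : Ω → ℝ} (hD1 : Measurable D1) (hD2 : Measurable D2)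
    (hY0 : Integrable Y0 P) (hY2 : Integrable Y2 P)
    (hD1v : ∀ ω, D1 ω = 0 ∨ D1 ω = 1) (hD2v : ∀ ω, D2 ω = 0 ∨ D2 ω = 1)
    {Y0p Y2p : ℝ × ℝ → Ω → ℝ}
    (hY0p : Integrable (Y0p (0, 0)) P) (hY2p : Integrable (Y2p (0, 0)) P)
    (hcons0 : ∀ ω, Y0 ω = Y0p (D1 ω, D2 ω) ω) (hcons2 : ∀ ω, Y2 ω = Y2p (D1 ω, D2 ω) ω)
    (hDID11 : DID P X D1 D2 Y0p Y2p (1, 1)) (hDID01 : DID P X D1 D2 Y0p Y2p (0, 1))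
    (hstag : ∀ᵐ ω ∂P, D1 ω ≤ D2 ω)
    (hpos11 : 0 < P (evD D1 D2 (1, 1))) (hpos01 : 0 < P (evD D1 D2 (0, 1)))
    {pD2 : 𝓧 → ℝ} (hpD2 : IsCondMeanGiven P X univ (ind (evD2 D2 1)) pD2)
    (hpD2_lt : ∀ᵐ ω ∂P, pD2 (X ω) < 1) {m1 m0 : 𝓧 → ℝ}
    (hm1 : IsCondMeanGiven P X (evD2 D2 1) (fun ω => Y2 ω - Y0 ω) m1)
    (hm0 : IsCondMeanGiven P X (evD2 D2 0) (fun ω => Y2 ω - Y0 ω) m0) :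
    (∫ ω, D2 ω ∂P)⁻¹ * ∫ ω, D2 ω * (m1 (X ω) - m0 (X ω)) ∂P
      = tau P D1 D2 Y2p (1, 1) * ((P (evD D1 D2 (1, 1))).toReal / (P (evD2 D2 1)).toReal)
        + tau P D1 D2 Y2p (0, 1) * ((P (evD D1 D2 (0, 1))).toReal / (P (evD2 D2 1)).toReal) := by
  have hB : MeasurableSet (evD2 D2 1) := hD2 (measurableSet_singleton 1)
  have hd := measurableSet_evD hD1 hD2
  have hΔ : Integrable (fun ω => Y2 ω - Y0 ω) P := hY2.sub hY0
  have hT : Integrable (untreatedTrend Y0p Y2p) P := hY2p.sub hY0p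
  have never_treated := diff_ae_eq_untreatedTrend_of_staggered hD2 hD1v hcons0 hcons2 hstag
  rw [← compl_evD2_one hD2v] at hm0 never_treated
  obtain ⟨tr, htr, -⟩ := hDID11.2
  have htrB :=
    isCondMeanGiven_untreatedTrend_evD2_one hX hD1 hD2 hD1v hT hDID11 hDID01 htr
  have numerator : ∫ ω, D2 ω * (m1 (X ω) - m0 (X ω)) ∂P
      = tau P D1 D2 Y2p (1, 1) * (P (evD D1 D2 (1, 1))).toReal
        + tau P D1 D2 Y2p (0, 1) * (P (evD D1 D2 (0, 1))).toReal :=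
    calc ∫ ω, D2 ω * (m1 (X ω) - m0 (X ω)) ∂P
        = ∫ ω in evD2 D2 1, (m1 (X ω) - m0 (X ω)) ∂P := by
          rw [← integral_ind_mul hB, ind_evD2_one hD2v]
      _ = ∫ ω in evD2 D2 1, (Y2 ω - Y0 ω - untreatedTrend Y0p Y2p ω) ∂P :=
          setIntegral_condMean_sub_eq hX hB hΔ hT never_treated htr htrB hm1 hm0 hpD2 hpD2_lt
      _ = ∫ ω in evD D1 D2 (1, 1), (Y2 ω - Y0 ω - untreatedTrend Y0p Y2p ω) ∂P
          + ∫ ω in evD D1 D2 (0, 1), (Y2 ω - Y0 ω - untreatedTrend Y0p Y2p ω) ∂P :=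
          setIntegral_evD2 hD1 hD2 hD1v 1 (hΔ.sub hT).integrableOn
      _ = _ := by
          rw [tau_mul_measure hpos11, tau_mul_measure hpos01,
            hDID11.setIntegral_diff_sub_untreatedTrend (hd _) hY0 hY2 hY0p hY2p hcons0 hcons2,
            hDID01.setIntegral_diff_sub_untreatedTrend (hd _) hY0 hY2 hY0p hY2p hcons0 hcons2]
  have denominator : ∫ ω, D2 ω ∂P = (P (evD2 D2 1)).toReal := by
    rw [← integral_ind hB, ind_evD2_one hD2v]
  rw [numerator, denominator]
  ring

/-- Pre/post DID under staggered adoption identifies a convex combination of the PDATTs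
of early and late adoption. -/
theorem statement_19
    [MeasurableSpace Ω] [m𝓧 : MeasurableSpace 𝓧]
    (P : Measure Ω) [IsProbabilityMeasure P]
    (X : Ω → 𝓧) (hX : Measurable X)
    (Y0 Y2 D1 D2 : Ω → ℝ)
    (hY0 : Measurable Y0) (hY2 : Measurable Y2)
    (hD1 : Measurable D1) (hD2 : Measurable D2)
    (hY0i : Integrable Y0 P) (hY2i : Integrable Y2 P)
    (hD1v : ∀ ω, D1 ω = 0 ∨ D1 ω = 1) (hD2v : ∀ ω, D2 ω = 0 ∨ D2 ω = 1)
    (Y0p Y2p : ℝ × ℝ → Ω → ℝ)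
    (hY0p : ∀ e ∈ allPaths, Measurable (Y0p e) ∧ Integrable (Y0p e) P)
    (hY2p : ∀ e ∈ allPaths, Measurable (Y2p e) ∧ Integrable (Y2p e) P)
    (hcons0 : ∀ ω, Y0 ω = Y0p (D1 ω, D2 ω) ω)
    (hcons2 : ∀ ω, Y2 ω = Y2p (D1 ω, D2 ω) ω)
    (hDID11 : DID P X D1 D2 Y0p Y2p (1, 1)) (hDID01 : DID P X D1 D2 Y0p Y2p (0, 1))
    (hstag : ∀ᵐ ω ∂P, D1 ω ≤ D2 ω)
    (hpos11 : 0 < P (evD D1 D2 (1, 1))) (hpos01 : 0 < P (evD D1 D2 (0, 1)))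
    (pD2 : 𝓧 → ℝ)
    (hpD2 : IsCondMeanGiven P X Set.univ (ind (evD2 D2 1)) pD2)
    (hpD2v : ∀ᵐ ω ∂P, 0 < pD2 (X ω) ∧ pD2 (X ω) < 1)
    (hD2pos : 0 < P (evD2 D2 1)) (hD2lt : P (evD2 D2 1) < 1)
    (m1 m0 : 𝓧 → ℝ)
    (hm1 : IsCondMeanGiven P X (evD2 D2 1) (fun ω => Y2 ω - Y0 ω) m1)
    (hm0 : IsCondMeanGiven P X (evD2 D2 0) (fun ω => Y2 ω - Y0 ω) m0)
    (hfin : Integrable (fun ω => D2 ω * (m1 (X ω) - m0 (X ω))) P) :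
    (∫ ω, D2 ω ∂P)⁻¹ * ∫ ω, D2 ω * (m1 (X ω) - m0 (X ω)) ∂P
      = tau P D1 D2 Y2p (1, 1) * ((P (evD D1 D2 (1, 1))).toReal / (P (evD2 D2 1)).toReal)
        + tau P D1 D2 Y2p (0, 1) * ((P (evD D1 D2 (0, 1))).toReal / (P (evD2 D2 1)).toReal) := by
  exact statement_19_general hX hD1 hD2 hY0i hY2i hD1v hD2v (hY0p _ (by simp [allPaths])).2
    (hY2p _ (by simp [allPaths])).2 hcons0 hcons2 hDID11 hDID01 hstag hpos11 hpos01 hpD2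
    (hpD2v.mono fun _ => And.right) hm1 hm0

end DIDMissing
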